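/- Let α > −1 and n ≥ 1, let a, b ∈ ℂ \ {0} and c ∈ 𝔻, set ψ(z) = a z^n/(n! (1 − conj(c) z)^{n+α+2}) and φ(z) = c + b z/(1 − conj(c) z), assume φ maps 𝔻 into 𝔻 and D_{ψ,φ,n} is bounded and normal on A_α². If c = 0, then D_{ψ,φ,n} is J-symmetric; and if c ≠ 0, then D_{ψ,φ,n} is C_{e^{−2iθ}z}J-symmetric, where θ = Arg(c) and C_{e^{−2iθ}z} f(z) = f(e^{−2iθ} z). -/

import Mathlib

open Complex Metric Set

noncomputable section

/-- The open unit disk in `ℂ`. -/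
def unitDisk : Set ℂ := Metric.ball 0 1

/-- `wb2 α j` is `β(j)² = j!·Γ(α+2)/Γ(j+α+2)`, the square of the norm of `z^j` in `A_α²`. -/
def wb2 (α : ℝ) (j : ℕ) : ℝ :=
  (j.factorial : ℝ) * Real.Gamma (α + 2) / Real.Gamma ((j : ℝ) + α + 2)

/-- The `j`-th Taylor coefficient of `f` at `0`. -/
def tcoeff (f : ℂ → ℂ) (j : ℕ) : ℂ := iteratedDeriv j f 0 / (j.factorial : ℂ)

/-- An abstract model of the weighted Bergman space `A_α²`: a complex Hilbert space `H`
whose elements are (identified with) the analytic functions on the unit disk with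
square-summable weighted Taylor coefficients, with the weighted `ℓ²` inner product. -/
structure BergmanModel (α : ℝ) (H : Type) [NormedAddCommGroup H]
    [InnerProductSpace ℂ H] where
  emb : H →ₗ[ℂ] (ℂ → ℂ)
  analyticOn : ∀ f : H, AnalyticOnNhd ℂ (emb f) unitDisk
  summable_norm : ∀ f : H, Summable (fun j => ‖tcoeff (emb f) j‖ ^ 2 * wb2 α j)
  inj : ∀ f g : H, Set.EqOn (emb f) (emb g) unitDisk → f = g
  exists_rep : ∀ F : ℂ → ℂ, AnalyticOnNhd ℂ F unitDisk →
      Summable (fun j => ‖tcoeff F j‖ ^ 2 * wb2 α j) →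
      ∃ f : H, Set.EqOn (emb f) F unitDisk
  inner_eq : ∀ f g : H,
      (@inner ℂ H _ f g) =
        ∑' j : ℕ, (starRingEnd ℂ) (tcoeff (emb f) j) * tcoeff (emb g) j * (wb2 α j : ℂ)

/-- The derivative-evaluation kernel `K_w^{(m)}(z) = m!·z^m / (β(m)²·(1-conj(w)·z)^(m+α+2))`. -/
def kern (α : ℝ) (m : ℕ) (w z : ℂ) : ℂ :=
  (m.factorial : ℂ) * z ^ m /
    ((wb2 α m : ℂ) * (1 - (starRingEnd ℂ) w * z) ^ ((m : ℂ) + (α : ℂ) + 2))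

/-- The argument of a complex number, normalized to lie in `[0, 2π)` (with `Arg 0 = 0`). -/
def arg2pi (c : ℂ) : ℝ :=
  if Complex.arg c < 0 then Complex.arg c + 2 * Real.pi else Complex.arg c

/-- The constant `Γ(m+α+2)/Γ(α+2)`. -/
def kA (α : ℝ) (m : ℕ) : ℝ := Real.Gamma ((m : ℝ) + α + 2) / Real.Gamma (α + 2)

/-- The `m`-th derivative of `(1-x)^{-(α+2)}`. -/
def kF (α : ℝ) (m : ℕ) (x : ℂ) : ℂ := (kA α m : ℂ) * (1 - x) ^ (-((m : ℂ) + (α : ℂ) + 2))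

lemma kA_succ (α : ℝ) (hα : -1 < α) (m : ℕ) : kA α (m + 1) = ((m : ℝ) + α + 2) * kA α m := by
  have h : (m : ℝ) + α + 2 ≠ 0 := by
    have : (0 : ℝ) ≤ m := Nat.cast_nonneg m
    linarith
  unfold kA
  have : ((m + 1 : ℕ) : ℝ) + α + 2 = ((m : ℝ) + α + 2) + 1 := by push_cast; ring
  rw [this, Real.Gamma_add_one h]
  ring

lemma gam_pos (α : ℝ) (hα : -1 < α) (m : ℕ) : 0 < Real.Gamma ((m : ℝ) + α + 2) := by
  apply Real.Gamma_pos_of_pos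
  have : (0 : ℝ) ≤ m := Nat.cast_nonneg m
  linarith

lemma gam_pos' (α : ℝ) (hα : -1 < α) : 0 < Real.Gamma (α + 2) := by
  apply Real.Gamma_pos_of_pos
  linarith

lemma kA_mul_wb2 (α : ℝ) (hα : -1 < α) (m : ℕ) : kA α m * wb2 α m = m.factorial := by
  have h1 := (gam_pos α hα m).ne'
  have h2 := (gam_pos' α hα).ne'
  unfold kA wb2
  field_simp

lemma kF_zero (α : ℝ) (m : ℕ) : kF α m 0 = kA α m := by simp [kF]

lemma mem_disk {z : ℂ} : z ∈ unitDisk ↔ ‖z‖ < 1 := by simp [unitDisk]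

lemma isOpen_disk : IsOpen unitDisk := Metric.isOpen_ball

lemma re_pos_of_disk {x : ℂ} (hx : x ∈ unitDisk) : 0 < (1 - x).re := by
  have := (Complex.re_le_norm x).trans_lt (mem_disk.1 hx)
  simp; linarith

lemma slit_of_disk {x : ℂ} (hx : x ∈ unitDisk) : 1 - x ∈ Complex.slitPlane :=
  Or.inl (re_pos_of_disk hx)

lemma mul_disk {q z : ℂ} (hq : ‖q‖ ≤ 1) (hz : z ∈ unitDisk) : q * z ∈ unitDisk := by
  rw [mem_disk] at *
  rw [norm_mul]
  nlinarith [norm_nonneg q, norm_nonneg z]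

lemma kF_hasDerivAt (α : ℝ) (hα : -1 < α) (m : ℕ) {x : ℂ} (hx : x ∈ unitDisk) :
    HasDerivAt (kF α m) (kF α (m + 1) x) x := by
  have h1 : HasDerivAt (fun y : ℂ => 1 - y) (-1) x := by
    simpa using (hasDerivAt_id x).const_sub 1
  have h2 := (h1.cpow_const (c := -((m : ℂ) + (α : ℂ) + 2)) (slit_of_disk hx)).const_mul
    (kA α m : ℂ)
  refine h2.congr_deriv ?_
  unfold kF
  rw [kA_succ α hα]
  push_cast
  have : -((m : ℂ) + (α : ℂ) + 2) - 1 = -((m : ℂ) + 1 + (α : ℂ) + 2) := by ring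
  rw [this]
  ring

lemma iteratedDeriv_kF (α : ℝ) (hα : -1 < α) (m i : ℕ) {q : ℂ} (hq : ‖q‖ ≤ 1) :
    ∀ z ∈ unitDisk, iteratedDeriv i (fun z => kF α m (q * z)) z = q ^ i * kF α (m + i) (q * z) := by
  induction i with
  | zero => intro z _; simp
  | succ i ih =>
    intro z hz
    rw [iteratedDeriv_succ]
    have he : iteratedDeriv i (fun z => kF α m (q * z)) =ᶠ[nhds z]
        fun z => q ^ i * kF α (m + i) (q * z) := by
      filter_upwards [isOpen_disk.mem_nhds hz] with y hy using ih y hy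
    rw [he.deriv_eq]
    have h1 : HasDerivAt (fun z : ℂ => q * z) q z := by
      simpa using (hasDerivAt_id z).const_mul q
    have h2 := ((kF_hasDerivAt α hα (m + i) (mul_disk hq hz)).comp z h1).const_mul (q ^ i)
    rw [show m + (i + 1) = m + i + 1 by ring]
    refine (HasDerivAt.deriv h2).trans ?_
    ring

lemma analytic_of_diff {f : ℂ → ℂ} (h : ∀ z ∈ unitDisk, DifferentiableAt ℂ f z) :
    AnalyticOnNhd ℂ f unitDisk :=
  DifferentiableOn.analyticOnNhd (fun z hz => (h z hz).differentiableWithinAt) isOpen_disk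

lemma analytic_iter {f : ℂ → ℂ} (h : AnalyticOnNhd ℂ f unitDisk) (n : ℕ) :
    AnalyticOnNhd ℂ (iteratedDeriv n f) unitDisk := by
  rw [iteratedDeriv_eq_iterate]; exact h.iterated_deriv n

lemma kFq_analytic (α : ℝ) (hα : -1 < α) (m : ℕ) {q : ℂ} (hq : ‖q‖ ≤ 1) :
    AnalyticOnNhd ℂ (fun z => kF α m (q * z)) unitDisk := by
  apply analytic_of_diff
  intro z hz
  have h1 : HasDerivAt (fun z : ℂ => q * z) q z := by
    simpa using (hasDerivAt_id z).const_mul q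
  exact ((kF_hasDerivAt α hα m (mul_disk hq hz)).comp z h1).differentiableAt

lemma zero_disk : (0 : ℂ) ∈ unitDisk := by simp [mem_disk]

lemma tcoeff_pow_mul {G : ℂ → ℂ} (hG : AnalyticOnNhd ℂ G unitDisk) (n j : ℕ) :
    tcoeff (fun z => z ^ n * G z) j = if n ≤ j then tcoeff G (j - n) else 0 := by
  have h1 : ContDiffAt ℂ j (fun z : ℂ => z ^ n) 0 := by fun_prop
  have h2 : ContDiffAt ℂ j G 0 := (hG 0 zero_disk).contDiffAt
  have h3 := iteratedDeriv_mul h1 h2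
  have h4 : iteratedDeriv j (fun z => z ^ n * G z) 0 = iteratedDeriv j ((fun z => z ^ n) * G) 0 := rfl
  unfold tcoeff
  rw [h4, h3]
  simp only [iteratedDeriv_fun_pow_zero]
  split_ifs with hnj
  · rw [Finset.sum_eq_single n]
    · simp only [if_true]
      have hc := Nat.choose_mul_factorial_mul_factorial hnj
      have hc' : (j.choose n : ℂ) * n.factorial * (j - n).factorial = j.factorial := by
        exact_mod_cast hc
      have a1 : ((j - n).factorial : ℂ) ≠ 0 := by exact_mod_cast Nat.factorial_ne_zero _
      have a2 : (j.factorial : ℂ) ≠ 0 := by exact_mod_cast Nat.factorial_ne_zero _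
      rw [div_eq_div_iff a2 a1, ← hc']
      ring
    · intro i _ hi
      simp [hi]
    · intro h; exact absurd (Finset.mem_range.2 (by omega)) h
  · rw [Finset.sum_eq_zero]
    · simp
    · intro i hi
      have : i ≠ n := by have := Finset.mem_range.1 hi; omega
      simp [this]

/-- The kernel function `z^n F^{(n)}(conj p z)`. -/
def kK (α : ℝ) (n : ℕ) (p z : ℂ) : ℂ := z ^ n * kF α n ((starRingEnd ℂ) p * z)

lemma conj_norm_le {p : ℂ} (hp : p ∈ unitDisk) : ‖(starRingEnd ℂ) p‖ ≤ 1 := by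
  rw [RCLike.norm_conj]; exact (mem_disk.1 hp).le

lemma kK_analytic (α : ℝ) (hα : -1 < α) (n : ℕ) {p : ℂ} (hp : p ∈ unitDisk) :
    AnalyticOnNhd ℂ (kK α n p) unitDisk := by
  intro z hz
  exact (analyticAt_id.pow n).mul (kFq_analytic α hα n (conj_norm_le hp) z hz)

lemma tcoeff_kK (α : ℝ) (hα : -1 < α) (n : ℕ) {p : ℂ} (hp : p ∈ unitDisk) (j : ℕ) :
    tcoeff (kK α n p) j = if n ≤ j then
      (starRingEnd ℂ) p ^ (j - n) * kA α j / (j - n).factorial else 0 := by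
  unfold kK
  rw [tcoeff_pow_mul (kFq_analytic α hα n (conj_norm_le hp))]
  split_ifs with h
  · unfold tcoeff
    rw [iteratedDeriv_kF α hα n _ (conj_norm_le hp) 0 zero_disk, mul_zero, kF_zero,
      Nat.add_sub_cancel' h]
  · rfl

lemma hasSum_kK (α : ℝ) (hα : -1 < α) (n : ℕ) {p : ℂ} (hp : p ∈ unitDisk) {g : ℂ → ℂ}
    (hg : AnalyticOnNhd ℂ g unitDisk) :
    HasSum (fun j => (starRingEnd ℂ) (tcoeff (kK α n p) j) * tcoeff g j * (wb2 α j : ℂ))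
      (iteratedDeriv n g p) := by
  have h0 : HasSum (fun i : ℕ => ((i.factorial : ℂ))⁻¹ • (p - 0) ^ i •
      iteratedDeriv i (iteratedDeriv n g) 0) (iteratedDeriv n g p) :=
    Complex.hasSum_taylorSeries_on_ball (r := 1)
      (fun z hz => (analytic_iter hg n z hz).differentiableAt.differentiableWithinAt) hp
  rw [← hasSum_nat_add_iff' n]
  have hz : ∑ i ∈ Finset.range n, (starRingEnd ℂ) (tcoeff (kK α n p) i) * tcoeff g i *
      (wb2 α i : ℂ) = 0 := by
    apply Finset.sum_eq_zero
    intro i hi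
    have : ¬ n ≤ i := by have := Finset.mem_range.1 hi; omega
    rw [tcoeff_kK α hα n hp, if_neg this]
    simp
  rw [hz, sub_zero]
  refine (funext fun i => ?_ : (fun j => (starRingEnd ℂ) (tcoeff (kK α n p) (j + n)) *
    tcoeff g (j + n) * (wb2 α (j + n) : ℂ)) = _) ▸ h0
  rw [tcoeff_kK α hα n hp, if_pos (Nat.le_add_left n i), Nat.add_sub_cancel]
  have hh : (kA α (i + n) : ℂ) * (wb2 α (i + n) : ℂ) = (i + n).factorial := by
    exact_mod_cast kA_mul_wb2 α hα (i + n)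
  have a2 : ((i + n).factorial : ℂ) ≠ 0 := by exact_mod_cast Nat.factorial_ne_zero _
  have hd : iteratedDeriv i (iteratedDeriv n g) 0 = iteratedDeriv (i + n) g 0 := by
    simp only [iteratedDeriv_eq_iterate, Function.iterate_add_apply]
  rw [hd]
  unfold tcoeff
  simp only [map_mul, map_div₀, map_pow, Complex.conj_conj, Complex.conj_ofReal, map_natCast,
    smul_eq_mul, sub_zero]
  calc _ = (p ^ i / i.factorial) * (iteratedDeriv (i + n) g 0 / (i + n).factorial) *
        ((kA α (i + n) : ℂ) * (wb2 α (i + n) : ℂ)) := by ring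
    _ = _ := by rw [hh]; field_simp

lemma tcoeff_congr {f g : ℂ → ℂ} (h : Set.EqOn f g unitDisk) (j : ℕ) : tcoeff f j = tcoeff g j := by
  unfold tcoeff
  rw [h.iteratedDeriv_of_isOpen isOpen_disk j zero_disk]

lemma exists_kernel (α : ℝ) (hα : -1 < α) (n : ℕ) {p : ℂ} (hp : p ∈ unitDisk)
    {H : Type} [NormedAddCommGroup H] [InnerProductSpace ℂ H] (M : BergmanModel α H) :
    ∃ k : H, Set.EqOn (M.emb k) (kK α n p) unitDisk ∧
      ∀ g : H, (@inner ℂ H _ k g) = iteratedDeriv n (M.emb g) p := by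
  have hK := kK_analytic α hα n hp
  have hs := (hasSum_kK α hα n hp hK).summable
  have hs' : Summable (fun j => ‖tcoeff (kK α n p) j‖ ^ 2 * wb2 α j) := by
    rw [← Complex.summable_ofReal]
    refine hs.congr fun j => ?_
    rw [Complex.conj_mul']
    push_cast
    rfl
  obtain ⟨k, hk⟩ := M.exists_rep _ hK hs'
  refine ⟨k, hk, fun g => ?_⟩
  rw [M.inner_eq]
  simp only [tcoeff_congr hk]
  exact (hasSum_kK α hα n hp (M.analyticOn g)).tsum_eq

lemma iteratedDeriv_conj {f g : ℂ → ℂ} (hf : AnalyticOnNhd ℂ f unitDisk) {u : ℂ} (hu : ‖u‖ = 1)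
    (hg : ∀ z ∈ unitDisk, g z = (starRingEnd ℂ) (f ((starRingEnd ℂ) (u * z)))) (n : ℕ) :
    ∀ z ∈ unitDisk, iteratedDeriv n g z =
      u ^ n * (starRingEnd ℂ) (iteratedDeriv n f ((starRingEnd ℂ) (u * z))) := by
  induction n with
  | zero => intro z hz; simpa using hg z hz
  | succ i ih =>
    intro z hz
    rw [iteratedDeriv_succ]
    have he : iteratedDeriv i g =ᶠ[nhds z] fun z =>
        u ^ i * (starRingEnd ℂ) (iteratedDeriv i f ((starRingEnd ℂ) (u * z))) := by
      filter_upwards [isOpen_disk.mem_nhds hz] with y hy using ih y hy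
    rw [he.deriv_eq]
    have hm : (starRingEnd ℂ) (u * z) ∈ unitDisk := by
      have := mul_disk hu.le hz
      rw [mem_disk] at *
      rwa [RCLike.norm_conj]
    have h1 : HasDerivAt (fun z : ℂ => u * z) u z := by
      simpa using (hasDerivAt_id z).const_mul u
    have h0 := (analytic_iter hf i _ hm).differentiableAt.hasDerivAt.conj_conj
    rw [Complex.conj_conj] at h0
    have h2 := (h0.comp z h1).const_mul (u ^ i)
    refine (HasDerivAt.deriv h2).trans ?_
    rw [iteratedDeriv_succ]
    ring

lemma mul_cpow_re_pos {x y : ℂ} (hx : 0 < x.re) (hy : 0 < y.re) (s : ℂ) :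
    (x * y) ^ s = x ^ s * y ^ s := by
  have hx0 : x ≠ 0 := by rintro rfl; simp at hx
  have hy0 : y ≠ 0 := by rintro rfl; simp at hy
  have h1 := abs_lt.1 (Complex.abs_arg_lt_pi_div_two_iff.2 (Or.inl hx))
  have h2 := abs_lt.1 (Complex.abs_arg_lt_pi_div_two_iff.2 (Or.inl hy))
  rw [Complex.cpow_def_of_ne_zero (mul_ne_zero hx0 hy0), Complex.cpow_def_of_ne_zero hx0,
    Complex.cpow_def_of_ne_zero hy0, Complex.log_mul hx0 hy0 ⟨by linarith, by linarith⟩, add_mul,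
    Complex.exp_add]

lemma main_lemma (α : ℝ) (hα : -1 < α) (n : ℕ)
    (H : Type) [NormedAddCommGroup H] [InnerProductSpace ℂ H] [CompleteSpace H]
    (M : BergmanModel α H)
    (a b c : ℂ) (hc : c ∈ unitDisk)
    (ψ φ : ℂ → ℂ)
    (hψ : ∀ z ∈ unitDisk, ψ z = a * z ^ n /
      ((n.factorial : ℂ) * (1 - (starRingEnd ℂ) c * z) ^ ((n : ℂ) + (α : ℂ) + 2)))
    (hφ : ∀ z ∈ unitDisk, φ z = c + b * z / (1 - (starRingEnd ℂ) c * z))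
    (hφm : ∀ z ∈ unitDisk, φ z ∈ unitDisk)
    (T : H →L[ℂ] H)
    (hT : ∀ f : H, ∀ z ∈ unitDisk,
      M.emb (T f) z = ψ z * iteratedDeriv n (M.emb f) (φ z))
    (u : ℂ) (hu : ‖u‖ = 1) (huc : u * c = (starRingEnd ℂ) c)
    (Cm : H → H)
    (hCm : ∀ f : H, ∀ z ∈ unitDisk,
        M.emb (Cm f) z = (starRingEnd ℂ) (M.emb f ((starRingEnd ℂ) (u * z)))) (f : H) :
    Cm (ContinuousLinearMap.adjoint T (Cm f)) = T f := by
  apply M.inj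
  intro w hw
  have hconj : ∀ z ∈ unitDisk, (starRingEnd ℂ) (u * z) ∈ unitDisk := by
    intro z hz
    have := mul_disk hu.le hz
    rw [mem_disk] at *
    rwa [RCLike.norm_conj]
  have hw' := hconj w hw
  have hp := hφm w hw
  have hp' := hconj _ hp
  have huu : (starRingEnd ℂ) u * u = 1 := by
    rw [Complex.conj_mul', hu]; simp
  obtain ⟨k, hk, hki⟩ := exists_kernel α hα 0 hw' M
  obtain ⟨l, hl, hli⟩ := exists_kernel α hα n hp' M
  have key : T k = (ψ w * u ^ n) • l := by
    apply M.inj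
    intro z hz
    have hzp := hφm z hz
    rw [hT k z hz, map_smul, Pi.smul_apply, hl hz, smul_eq_mul,
      hk.iteratedDeriv_of_isOpen isOpen_disk n hzp]
    have e1 : kK α 0 ((starRingEnd ℂ) (u * w)) = fun z => kF α 0 ((u * w) * z) := by
      funext y; simp [kK]
    have huw := mul_disk hu.le hw
    rw [e1, iteratedDeriv_kF α hα 0 n (mem_disk.1 huw).le _ hzp, zero_add]
    unfold kK kF
    rw [Complex.conj_conj, hψ z hz, hψ w hw]
    have d1 := mul_disk (conj_norm_le hc) hz
    have d2 := mul_disk (conj_norm_le hc) hw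
    have d3 := mul_disk (mem_disk.1 huw).le hzp
    have d4 := mul_disk (mem_disk.1 (mul_disk hu.le hp)).le hz
    have r1 := re_pos_of_disk d1
    have r2 := re_pos_of_disk d2
    have r3 := re_pos_of_disk d3
    have r4 := re_pos_of_disk d4
    have n1 : 1 - (starRingEnd ℂ) c * z ≠ 0 := Complex.slitPlane_ne_zero (slit_of_disk d1)
    have n2 : 1 - (starRingEnd ℂ) c * w ≠ 0 := Complex.slitPlane_ne_zero (slit_of_disk d2)
    have hmul : (1 - (starRingEnd ℂ) c * z) * (1 - u * w * φ z) =
        (1 - (starRingEnd ℂ) c * w) * (1 - u * φ w * z) := by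
      have ez : (1 - (starRingEnd ℂ) c * z) * φ z = c * (1 - (starRingEnd ℂ) c * z) + b * z := by
        rw [hφ z hz]; field_simp
      have ew : (1 - (starRingEnd ℂ) c * w) * φ w = c * (1 - (starRingEnd ℂ) c * w) + b * w := by
        rw [hφ w hw]; field_simp
      linear_combination -(u * w) * ez + u * z * ew + (z - w) * huc
    set s : ℂ := (n : ℂ) + (α : ℂ) + 2 with hs
    have hpow := congrArg (fun x : ℂ => x ^ (-s)) hmul
    beta_reduce at hpow
    rw [mul_cpow_re_pos r1 r3, mul_cpow_re_pos r2 r4, Complex.cpow_neg _ s,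
      Complex.cpow_neg (1 - (starRingEnd ℂ) c * w) s] at hpow
    simp only [div_eq_mul_inv, mul_inv, mul_pow]
    linear_combination (a * z ^ n * (n.factorial : ℂ)⁻¹ * u ^ n * w ^ n * kA α n) * hpow
  rw [hCm _ w hw]
  have h1 : M.emb (ContinuousLinearMap.adjoint T (Cm f)) ((starRingEnd ℂ) (u * w)) =
      @inner ℂ H _ k (ContinuousLinearMap.adjoint T (Cm f)) := by
    rw [hki, iteratedDeriv_zero]
  rw [h1, ContinuousLinearMap.adjoint_inner_right, key, inner_smul_left, hli,
    iteratedDeriv_conj (M.analyticOn f) hu (hCm f) n _ hp', hT f w hw]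
  have e2 : (starRingEnd ℂ) (u * (starRingEnd ℂ) (u * φ w)) = φ w := by
    rw [map_mul, Complex.conj_conj, ← mul_assoc, huu, one_mul]
  rw [e2]
  simp only [map_mul, map_pow, Complex.conj_conj]
  have e3 : u ^ n * (starRingEnd ℂ) u ^ n = 1 := by
    rw [← mul_pow, mul_comm, huu, one_pow]
  linear_combination (ψ w * iteratedDeriv n (M.emb f) (φ w)) * e3

lemma exp_arg2pi (c : ℂ) : Complex.exp (-(2 * (arg2pi c : ℂ)) * Complex.I) =
    Complex.exp (-(2 * (Complex.arg c : ℂ)) * Complex.I) := by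
  unfold arg2pi
  split_ifs
  · rw [Complex.exp_eq_exp_iff_exists_int]
    refine ⟨-2, ?_⟩
    push_cast
    ring
  · rfl


/-- For `ψ(z) = a z^n/(n!(1-conj(c)z)^{n+α+2})` and
`φ(z) = c + bz/(1-conj(c)z)` with `a, b ≠ 0`, `c ∈ 𝔻`, `φ` a self-map of `𝔻`, and
`D_{ψ,φ,n}` bounded and normal on `A_α²`: if `c = 0` then `D_{ψ,φ,n}` is `J`-symmetric,
and if `c ≠ 0` then it is `C_{e^{-2iθ}z}J`-symmetric, where `θ = Arg(c)`. -/
theorem stmt_16 (α : ℝ) (hα : -1 < α) (n : ℕ) (hn : 1 ≤ n)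
    (H : Type) [NormedAddCommGroup H] [InnerProductSpace ℂ H] [CompleteSpace H]
    (M : BergmanModel α H)
    (a b c : ℂ) (ha : a ≠ 0) (hb : b ≠ 0) (hc : c ∈ unitDisk)
    (ψ φ : ℂ → ℂ)
    (hψ : ∀ z ∈ unitDisk, ψ z = a * z ^ n /
      ((n.factorial : ℂ) * (1 - (starRingEnd ℂ) c * z) ^ ((n : ℂ) + (α : ℂ) + 2)))
    (hφ : ∀ z ∈ unitDisk, φ z = c + b * z / (1 - (starRingEnd ℂ) c * z))
    (hφm : ∀ z ∈ unitDisk, φ z ∈ unitDisk)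
    (T : H →L[ℂ] H)
    (hT : ∀ f : H, ∀ z ∈ unitDisk,
      M.emb (T f) z = ψ z * iteratedDeriv n (M.emb f) (φ z))
    (hnormal : T.comp (ContinuousLinearMap.adjoint T)
      = (ContinuousLinearMap.adjoint T).comp T) :
    (c = 0 → ∀ Jm : H → H,
      (∀ f : H, ∀ z ∈ unitDisk,
        M.emb (Jm f) z = (starRingEnd ℂ) (M.emb f ((starRingEnd ℂ) z))) →
      ∀ f : H, Jm (ContinuousLinearMap.adjoint T (Jm f)) = T f) ∧
    (c ≠ 0 → ∀ Cm : H → H,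
      (∀ f : H, ∀ z ∈ unitDisk,
        M.emb (Cm f) z = (starRingEnd ℂ) (M.emb f
          ((starRingEnd ℂ) (Complex.exp (-(2 * (arg2pi c : ℂ)) * Complex.I) * z)))) →
      ∀ f : H, Cm (ContinuousLinearMap.adjoint T (Cm f)) = T f) := by
  refine ⟨?_, ?_⟩
  · intro h0 Jm hJ f
    refine main_lemma α hα n H M a b c hc ψ φ hψ hφ hφm T hT 1 (by simp) (by simp [h0]) Jm ?_ f
    simpa using hJ
  · intro h0 Cm hC f
    refine main_lemma α hα n H M a b c hc ψ φ hψ hφ hφm T hT _ ?_ ?_ Cm hC f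
    · rw [exp_arg2pi]
      have : -(2 * (Complex.arg c : ℂ)) * Complex.I = ((-(2 * Complex.arg c) : ℝ) : ℂ) * Complex.I := by
        push_cast; ring
      rw [this, Complex.norm_exp_ofReal_mul_I]
    · rw [exp_arg2pi]
      have hc' := Complex.norm_mul_exp_arg_mul_I c
      conv_rhs => rw [← hc']
      conv_lhs => rw [← hc']
      rw [map_mul, Complex.conj_ofReal, ← Complex.exp_conj]
      simp only [map_mul, Complex.conj_ofReal, Complex.conj_I]
      rw [mul_left_comm, ← Complex.exp_add, hc']
      congr 2
      ring
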